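/- Let λ, a, b, μ be real numbers with λ ≠ 0. Then the identity −2λ³(b + b²) − 16λ − 2λ(16 + a²λ²)·c₂(t)c₃(t) + 2λ³(ab − a)·c₁(t) = −16λ²μ·s₂(t)s₃(t) holds for every real t if and only if either (a = 0, b ∈ {0, −1}, and λμ = −2), or (b = 1, a ∈ {2, −2}, and λ² + 2μλ + 4 = 0); in the second case μ = −(λ² + 4)/(2λ). -/

import Mathlib

open Real

noncomputable def c (k : ℕ) (t : ℝ) : ℝ := Real.cos (t + 2 * Real.pi * ((k : ℝ) - 1) / 3)

noncomputable def s (k : ℕ) (t : ℝ) : ℝ := Real.sin (t + 2 * Real.pi * ((k : ℝ) - 1) / 3)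

theorem c_one (t : ℝ) : c 1 t = cos t := by
  simp [c]

theorem c_two_mul_c_three (t : ℝ) : c 2 t * c 3 t = cos t ^ 2 - 3 / 4 := by
  have h2 : t + 2 * π * (((2 : ℕ) : ℝ) - 1) / 3 = t - π / 3 + π := by push_cast; ring
  have h3 : t + 2 * π * (((3 : ℕ) : ℝ) - 1) / 3 = t + π / 3 + π := by push_cast; ring
  have h : √(3 : ℝ) ^ 2 = 3 := Real.sq_sqrt (by norm_num)
  rw [c, c, h2, h3, cos_add_pi, cos_add_pi, cos_sub, cos_add, cos_pi_div_three,
    sin_pi_div_three]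
  linear_combination (-(sin t ^ 2) / 4) * h - 3 / 4 * sin_sq_add_cos_sq t

theorem s_two_mul_s_three (t : ℝ) : s 2 t * s 3 t = 1 / 4 - cos t ^ 2 := by
  have h2 : t + 2 * π * (((2 : ℕ) : ℝ) - 1) / 3 = t - π / 3 + π := by push_cast; ring
  have h3 : t + 2 * π * (((3 : ℕ) : ℝ) - 1) / 3 = t + π / 3 + π := by push_cast; ring
  have h : √(3 : ℝ) ^ 2 = 3 := Real.sq_sqrt (by norm_num)
  rw [s, s, h2, h3, sin_add_pi, sin_add_pi, sin_sub, sin_add, cos_pi_div_three,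
    sin_pi_div_three]
  linear_combination (-(cos t ^ 2) / 4) * h + 1 / 4 * sin_sq_add_cos_sq t

theorem nearly_half_flat_classification (l a b μ : ℝ) (hl : l ≠ 0) :
    (∀ t : ℝ,
        -2 * l ^ 3 * (b + b ^ 2) - 16 * l - 2 * l * (16 + a ^ 2 * l ^ 2) * (c 2 t * c 3 t)
            + 2 * l ^ 3 * (a * b - a) * c 1 t
          = -(16 * l ^ 2 * μ) * (s 2 t * s 3 t)) ↔
      (a = 0 ∧ (b = 0 ∨ b = -1) ∧ l * μ = -2) ∨
      (b = 1 ∧ (a = 2 ∨ a = -2) ∧ l ^ 2 + 2 * μ * l + 4 = 0 ∧ μ = -((l ^ 2 + 4) / (2 * l))) := by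
  simp only [c_one, c_two_mul_c_three, s_two_mul_s_three]
  constructor
  · intro h
    have h₀ := h 0
    have h₁ := h π
    have h₂ := h (π / 2)
    rw [cos_zero] at h₀
    rw [cos_pi] at h₁
    rw [cos_pi_div_two] at h₂
    have hlin : a * (b - 1) = 0 := by
      apply mul_left_cancel₀ (pow_ne_zero 3 hl)
      linear_combination (h₀ - h₁) / 4
    have hquad : 16 + a ^ 2 * l ^ 2 + 8 * (l * μ) = 0 := by
      apply mul_left_cancel₀ hl
      linear_combination -(h₀ + h₁ - 2 * h₂) / 4
    have hconst : a ^ 2 = 2 * (b + b ^ 2) := by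
      apply mul_left_cancel₀ (pow_ne_zero 3 hl)
      linear_combination h₂ - l / 2 * hquad
    rcases mul_eq_zero.mp hlin with rfl | hb
    · refine Or.inl ⟨rfl, ?_, by linear_combination hquad / 8⟩
      have hb : b * (b + 1) = 0 := by linear_combination -hconst / 2
      exact (mul_eq_zero.mp hb).imp_right eq_neg_of_add_eq_zero_left
    · obtain rfl : b = 1 := sub_eq_zero.mp hb
      have ha : a ^ 2 = 2 ^ 2 := by linear_combination hconst
      have hμ : l ^ 2 + 2 * μ * l + 4 = 0 := by
        linear_combination hquad / 4 - l ^ 2 / 4 * ha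
      refine Or.inr ⟨rfl, sq_eq_sq_iff_eq_or_eq_neg.mp ha, hμ, ?_⟩
      field_simp
      linear_combination hμ
  · rintro (⟨rfl, rfl | rfl, hμ⟩ | ⟨rfl, rfl | rfl, hμ, -⟩) t
    · linear_combination 16 * l * (1 / 4 - cos t ^ 2) * hμ
    · linear_combination 16 * l * (1 / 4 - cos t ^ 2) * hμ
    · linear_combination 8 * l * (1 / 4 - cos t ^ 2) * hμ
    · linear_combination 8 * l * (1 / 4 - cos t ^ 2) * hμ
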